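/- arXiv:2506.01162 — 5 statements merged into one kernel-verified Lean document; each statement's English description precedes it below -/
import Mathlib

section
/- Let P be a probability measure on a measurable space X, let H_1, ..., H_n be probability measures with densities with respect to a common sigma-finite dominating measure, let OPT := min over j of TV(H_j, P), and let H_{i*} achieve this minimum. Then for every j, TV(H_j, P) <= w_{i*}(H_j) + 2·OPT, where w_{i*}(H_j) := |H_j(S_{i*,j}) - P(S_{i*,j})| and S_{i*,j} is the Scheffé set of H_{i*} and H_j. -/
/-!
The Scheffé set `S = {f < g}` of two probability measures `A = f μ`, `B = g μ` attains their total
variation distance: `B T - A T` grows when the part of `T` outside `S` is dropped and the rest of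
`S` is added, and passing to the complement of `T` flips the sign (`abs_sub_le_scheffe`). Hence for
every measurable `T`, with `S` the Scheffé set of `H istar` and `H j`,
`|H j T - P T| ≤ |H j S - H istar S| + |H istar T - P T|
  ≤ |H j S - P S| + |P S - H istar S| + |H istar T - P T|`,
and each of the last two terms is at most `tvDist (H istar) P`.
-/

open MeasureTheory ENNReal

/-- Total variation distance: supremum over measurable sets of the absolute
difference of the masses. -/
noncomputable def tvDist {X : Type*} [MeasurableSpace X]
    (P Q : Measure X) : ℝ :=
  ⨆ S : {S : Set X // MeasurableSet S}, |(P S.1).toReal - (Q S.1).toReal|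

/-- The Scheffé set `S_{i,j}` of the hypotheses with densities `h i`, `h j`:
the set where the density of `H_i` is below that of `H_j` (symmetrized as in
the paper: `S_{i,j} = S_{j,i}` for `i > j`). -/
def scheffeSet {X : Type*} {n : ℕ} (h : Fin n → X → ℝ≥0∞) (i j : Fin n) :
    Set X :=
  if i ≤ j then {x | h i x < h j x} else {x | h j x < h i x}

theorem abs_sub_le_tvDist {X : Type*} [MeasurableSpace X] (P Q : Measure X)
    [IsProbabilityMeasure P] [IsProbabilityMeasure Q] {S : Set X} (hS : MeasurableSet S) :
    |(P S).toReal - (Q S).toReal| ≤ tvDist P Q := by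
  refine le_ciSup (f := fun S : {S : Set X // MeasurableSet S} =>
    |(P S.1).toReal - (Q S.1).toReal|) ⟨1, ?_⟩ ⟨S, hS⟩
  rintro _ ⟨T, rfl⟩
  have hP : P.real T.1 ≤ 1 := measureReal_le_one
  have hQ : Q.real T.1 ≤ 1 := measureReal_le_one
  have hP0 : 0 ≤ P.real T.1 := measureReal_nonneg
  have hQ0 : 0 ≤ Q.real T.1 := measureReal_nonneg
  simp only [Measure.real] at hP hQ hP0 hQ0
  exact abs_le.2 ⟨by linarith, by linarith⟩

theorem withDensity_real_le_of_le_on {X : Type*} [MeasurableSpace X] {μ : Measure X}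
    {f g : X → ℝ≥0∞} (hg : Measurable g) [IsFiniteMeasure (μ.withDensity g)]
    {T : Set X} (hT : MeasurableSet T) (hfg : ∀ x ∈ T, f x ≤ g x) :
    (μ.withDensity f).real T ≤ (μ.withDensity g).real T := by
  refine ENNReal.toReal_mono (measure_ne_top _ _) ?_
  rw [withDensity_apply _ hT, withDensity_apply _ hT]
  exact setLIntegral_mono hg hfg

/-- The Scheffé set maximizes the one-sided difference of masses. -/
theorem sub_le_scheffe {X : Type*} [MeasurableSpace X] {μ : Measure X} {f g : X → ℝ≥0∞}
    (hf : Measurable f) (hg : Measurable g)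
    [IsFiniteMeasure (μ.withDensity f)] [IsFiniteMeasure (μ.withDensity g)]
    {T : Set X} (hT : MeasurableSet T) :
    (μ.withDensity g).real T - (μ.withDensity f).real T ≤
      (μ.withDensity g).real {x | f x < g x} - (μ.withDensity f).real {x | f x < g x} := by
  have hS : MeasurableSet {x | f x < g x} := measurableSet_lt hf hg
  have h1 := withDensity_real_le_of_le_on (μ := μ) (f := g) hf (hT.diff hS)
    (fun x hx => not_lt.1 hx.2)
  have h2 := withDensity_real_le_of_le_on (μ := μ) (f := f) hg (hS.diff hT)
    (fun x hx => le_of_lt hx.1)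
  have e1 := measureReal_inter_add_sdiff (μ := μ.withDensity g) (s := T) hS
  have e2 := measureReal_inter_add_sdiff (μ := μ.withDensity f) (s := T) hS
  have e3 := measureReal_inter_add_sdiff (μ := μ.withDensity g) (s := {x | f x < g x}) hT
  have e4 := measureReal_inter_add_sdiff (μ := μ.withDensity f) (s := {x | f x < g x}) hT
  rw [Set.inter_comm] at e3 e4
  linarith

theorem abs_sub_le_scheffe {X : Type*} [MeasurableSpace X] {μ : Measure X} {f g : X → ℝ≥0∞}
    (hf : Measurable f) (hg : Measurable g)
    [IsProbabilityMeasure (μ.withDensity f)] [IsProbabilityMeasure (μ.withDensity g)]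
    {T : Set X} (hT : MeasurableSet T) :
    |(μ.withDensity g).real T - (μ.withDensity f).real T| ≤
      (μ.withDensity g).real {x | f x < g x} - (μ.withDensity f).real {x | f x < g x} := by
  have h1 := sub_le_scheffe (μ := μ) hf hg hT
  -- Both total masses are `1`, so the complement of `T` gives the bound with opposite sign.
  have h2 := sub_le_scheffe (μ := μ) hf hg hT.compl
  rw [probReal_compl_eq_one_sub hT, probReal_compl_eq_one_sub hT] at h2
  exact abs_le.2 ⟨by linarith, by linarith⟩

/-- For every hypothesis `H_j`, `TV(H_j, P) ≤ w_{i*}(H_j) + 2·OPT`, where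
`i*` is an index achieving `OPT := min_j TV(H_j, P)` and
`w_{i*}(H_j) = |H_j(S_{i*,j}) - P(S_{i*,j})|`. -/
theorem tv_le_semiDist_add_two_opt {X : Type*} [MeasurableSpace X]
    (μ : Measure X) [SigmaFinite μ] {n : ℕ} (hn : 0 < n)
    (H : Fin n → Measure X) [∀ i, IsProbabilityMeasure (H i)]
    (P : Measure X) [IsProbabilityMeasure P]
    (h : Fin n → X → ℝ≥0∞) (hmeas : ∀ i, Measurable (h i))
    (hdens : ∀ i, H i = μ.withDensity (h i))
    (istar : Fin n) (hopt : ∀ j, tvDist (H istar) P ≤ tvDist (H j) P) :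
    ∀ j, tvDist (H j) P ≤
      |(H j (scheffeSet h istar j)).toReal - (P (scheffeSet h istar j)).toReal|
        + 2 * tvDist (H istar) P := by
  intro j
  have hS : MeasurableSet (scheffeSet h istar j) := by
    unfold scheffeSet
    split_ifs
    · exact measurableSet_lt (hmeas _) (hmeas _)
    · exact measurableSet_lt (hmeas _) (hmeas _)
  have hprob : ∀ i, IsProbabilityMeasure (μ.withDensity (h i)) := fun i => hdens i ▸ inferInstance
  -- The absolute value makes the bound insensitive to the orientation of the Scheffé set.
  have key : ∀ T, MeasurableSet T → |(H j).real T - (H istar).real T| ≤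
      |(H j).real (scheffeSet h istar j) - (H istar).real (scheffeSet h istar j)| := by
    intro T hT
    rw [hdens j, hdens istar]
    unfold scheffeSet
    split_ifs
    · exact (abs_sub_le_scheffe (hmeas _) (hmeas _) hT).trans (le_abs_self _)
    · rw [abs_sub_comm, abs_sub_comm (Measure.real _ {x | h j x < h istar x})]
      exact (abs_sub_le_scheffe (hmeas _) (hmeas _) hT).trans (le_abs_self _)
  have : Nonempty {S : Set X // MeasurableSet S} := ⟨⟨∅, MeasurableSet.empty⟩⟩
  refine ciSup_le fun T => ?_
  have h1 := key T.1 T.2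
  have h2 := abs_sub_le_tvDist (H istar) P T.2
  have h3 := abs_sub_le_tvDist (H istar) P hS
  have h4 := abs_sub_le ((H j) T.1).toReal ((H istar) T.1).toReal (P T.1).toReal
  have h5 := abs_sub_le ((H j) (scheffeSet h istar j)).toReal
    (P (scheffeSet h istar j)).toReal ((H istar) (scheffeSet h istar j)).toReal
  rw [abs_sub_comm (P (scheffeSet h istar j)).toReal] at h5
  simp only [Measure.real] at h1
  linarith
end

section
/- Let x = [x_1, ..., x_n] be a list of real numbers sorted in non-increasing order. For each i in [n] let x_i' := x_i + delta_i where |delta_i| <= Delta, and let y = [y_1, ..., y_n] be the multiset {x_i'} sorted in non-increasing order. Then for every i in [n], |y_i - x_i| <= Delta. -/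
/-! A permutation cannot map the initial segment `{j | j ≤ i}` into the strictly smaller
`{j | j < i}`, so some `j ≤ i` has `i ≤ σ j`; since `y` and `x` are non-increasing,
`y i ≤ y j ≤ x (σ j) + Δ ≤ x i + Δ`. The lower bound is the same argument for `σ⁻¹`. -/

theorem exists_le_and_le_perm {n : ℕ} (σ : Equiv.Perm (Fin n)) (i : Fin n) :
    ∃ j, j ≤ i ∧ i ≤ σ j := by
  by_contra! h
  have hcard := Finset.card_le_card_of_injOn (s := Finset.Iic i) (t := Finset.Iio i) σ
    (fun j hj => by simpa using h j (by simpa using hj)) σ.injective.injOn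
  simp at hcard

/-- If `x` is a non-increasing list of reals, each entry is perturbed by at
most `Δ`, and the perturbed values are re-sorted into a non-increasing list
`y`, then each sorted perturbed value is within `Δ` of the corresponding
original value. -/
theorem sorted_perturbation_stable (n : ℕ) (Δ : ℝ)
    (x δ y : Fin n → ℝ)
    (hx : ∀ i j : Fin n, i ≤ j → x j ≤ x i)
    (hδ : ∀ i, |δ i| ≤ Δ)
    (σ : Equiv.Perm (Fin n))
    (hy : ∀ i, y i = x (σ i) + δ (σ i))
    (hysorted : ∀ i j : Fin n, i ≤ j → y j ≤ y i) :
    ∀ i, |y i - x i| ≤ Δ := by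
  intro i
  rw [abs_le]
  constructor
  · obtain ⟨k, hki, hik⟩ := exists_le_and_le_perm σ.symm i
    have h₁ := hysorted _ _ hik
    have h₂ := hx _ _ hki
    have h₃ := (abs_le.mp (hδ k)).1
    rw [hy (σ.symm k), Equiv.apply_symm_apply] at h₁
    linarith
  · obtain ⟨j, hji, hij⟩ := exists_le_and_le_perm σ i
    have h₁ := hysorted _ _ hji
    have h₂ := hx _ _ hij
    have h₃ := (abs_le.mp (hδ (σ j))).2
    rw [hy j] at h₁
    linarith
end

section
/- Fix a hypothesis H_i, a public fixed list K = [H_{j_1}, ..., H_{j_t}] of hypotheses, and eta in (0,1]. For a dataset D in X^s, let score_{eta,K,D}(H_i) be the ⌈(eta/2)·t⌉-th largest value among the lift values ŵ_i(H_{j_l})(D) - W̃(H_{j_l})(D) for l = 1, ..., t. Then for any two datasets D, D' in X^s differing in exactly one entry, |score_{eta,K,D}(H_i) - score_{eta,K,D'}(H_i)| <= 2/s; i.e. the score has sensitivity 2/s with respect to the dataset. -/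
/-!
Changing one data point moves every empirical mass by at most `1 / s`, hence each semi-distance,
and each maximum of semi-distances, by at most `1 / s`, and each lift value by at most `2 / s`
(`abs_empMass_sub_le`, `lift_sub_le`). Order statistics are monotone and commute with shifts: if
`m` entries of the first list are at least `c`, the corresponding entries of the second list are
at least `c - 2 / s`, so its `m`-th largest entry is too (`kthLargest_sub_le`). Exchanging the two
datasets gives the bound on the absolute difference.
-/

/-- The empirical mass of a set `S` given a dataset `D` of `s` points. -/
noncomputable def empMass {X : Type*} {s : ℕ} (D : Fin s → X) (S : Set X) : ℝ :=
  (1 / (s : ℝ)) * ∑ k : Fin s, S.indicator (fun _ => (1 : ℝ)) (D k)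

/-- The `m`-th largest element of a list of reals (1-indexed), obtained by
sorting in non-increasing order. -/
noncomputable def kthLargest (L : List ℝ) (m : ℕ) : ℝ :=
  (L.insertionSort (· ≥ ·)).getD (m - 1) 0

/-- Changing one data point changes the empirical mass of any set by at most `1 / s`. -/
lemma abs_empMass_sub_le {X : Type*} {s : ℕ} (D D' : Fin s → X) (k : Fin s)
    (h : ∀ l : Fin s, l ≠ k → D l = D' l) (S : Set X) :
    |empMass D S - empMass D' S| ≤ 1 / (s : ℝ) := by
  unfold empMass
  rw [← mul_sub, ← Finset.sum_sub_distrib,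
    Finset.sum_eq_single k (fun l _ hl => by rw [h l hl, sub_self]) (by simp),
    abs_mul, abs_of_nonneg (by positivity : (0 : ℝ) ≤ 1 / (s : ℝ))]
  refine mul_le_of_le_one_right (by positivity) ?_
  by_cases h1 : D k ∈ S <;> by_cases h2 : D' k ∈ S <;> simp [h1, h2]

/-- In a non-increasing list, at least `i + 1` entries are at least the entry at index `i`. -/
lemma succ_le_countP_of_pairwise (S : List ℝ) (hS : S.Pairwise (· ≥ ·)) (i : ℕ)
    (hi : i < S.length) : i + 1 ≤ S.countP (fun y => decide (S[i] ≤ y)) := by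
  have h1 : (S.take (i + 1)).countP (fun y => decide (S[i] ≤ y)) = (S.take (i + 1)).length := by
    rw [List.countP_eq_length]
    intro y hy
    obtain ⟨j, hj, rfl⟩ := List.mem_iff_getElem.1 hy
    rw [List.length_take] at hj
    simp only [List.getElem_take, decide_eq_true_eq]
    rcases Nat.lt_or_ge j i with hji | hji
    · exact List.pairwise_iff_getElem.1 hS j i (by omega) hi hji
    · have : j = i := by omega
      subst this
      exact le_rfl
  have h2 := (List.take_sublist (i + 1) S).countP_le (p := fun y => decide (S[i] ≤ y))
  rw [h1, List.length_take] at h2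
  omega

/-- In a non-increasing list, if more than `i` entries are at least `c`, then so is the entry at
index `i`: otherwise everything from index `i` on is below `c`. -/
lemma le_getElem_of_lt_countP (S : List ℝ) (hS : S.Pairwise (· ≥ ·)) (i : ℕ)
    (hi : i < S.length) (c : ℝ) (hc : i < S.countP (fun y => decide (c ≤ y))) : c ≤ S[i] := by
  by_contra! hlt
  have h1 : (S.drop i).countP (fun y => decide (c ≤ y)) = 0 := by
    rw [List.countP_eq_zero]
    intro y hy
    obtain ⟨j, hj, rfl⟩ := List.mem_iff_getElem.1 hy
    rw [List.length_drop] at hj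
    simp only [List.getElem_drop, decide_eq_true_eq, not_le]
    rcases Nat.eq_zero_or_pos j with rfl | hj0
    · simpa using hlt
    · exact lt_of_le_of_lt
        (List.pairwise_iff_getElem.1 hS i (i + j) hi (by omega) (by omega)) hlt
  have h2 : (S.take i).countP (fun y => decide (c ≤ y)) ≤ i :=
    List.countP_le_length.trans (by simp)
  rw [← List.take_append_drop i S, List.countP_append, h1] at hc
  omega

/-- Lowering no entry by more than `δ` lowers no order statistic by more than `δ`. Both lists have
length `t`, so this also holds for out-of-range `m`, where `kthLargest` is `0`. -/
lemma kthLargest_sub_le {t : ℕ} (f g : Fin t → ℝ) (δ : ℝ) (hδ : 0 ≤ δ)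
    (h : ∀ l, f l - δ ≤ g l) (m : ℕ) :
    kthLargest (List.ofFn f) m - δ ≤ kthLargest (List.ofFn g) m := by
  unfold kthLargest
  have pf := List.perm_insertionSort (· ≥ ·) (List.ofFn f)
  have pg := List.perm_insertionSort (· ≥ ·) (List.ofFn g)
  have sf := List.pairwise_insertionSort (· ≥ ·) (List.ofFn f)
  have sg := List.pairwise_insertionSort (· ≥ ·) (List.ofFn g)
  have lf := pf.length_eq
  have lg := pg.length_eq
  rw [List.length_ofFn] at lf lg
  generalize (List.ofFn f).insertionSort (· ≥ ·) = F at *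
  generalize (List.ofFn g).insertionSort (· ≥ ·) = G at *
  rcases Nat.lt_or_ge (m - 1) t with hm | hm
  · rw [List.getD_eq_getElem _ _ (by omega), List.getD_eq_getElem _ _ (by omega)]
    apply le_getElem_of_lt_countP G sg
    have h1 := succ_le_countP_of_pairwise F sf (m - 1) (by omega)
    rw [pf.countP_eq, List.ofFn_eq_map, List.countP_map] at h1
    rw [pg.countP_eq, List.ofFn_eq_map, List.countP_map]
    refine lt_of_lt_of_le (Nat.lt_of_succ_le h1) (List.countP_mono_left ?_)
    intro l _ hl
    simp only [Function.comp_apply, decide_eq_true_eq] at hl ⊢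
    linarith [h l]
  -- Out of range, both sides take the default value `0`.
  · rw [List.getD_eq_default _ _ (by omega), List.getD_eq_default _ _ (by omega)]
    linarith

/-- The inequality behind the `2 / s` sensitivity of a lift value: both the semi-distance and
the maximum defining the proxy distance move by at most `ε`. -/
lemma lift_sub_le {ι : Type*} (A : Finset ι) (hA : A.Nonempty) (a p p' ε : ℝ)
    (b q q' : ι → ℝ) (hp : |p - p'| ≤ ε) (hq : ∀ k, |q k - q' k| ≤ ε) :
    (|a - p| - A.sup' hA (fun k => |b k - q k|)) - 2 * ε ≤
      |a - p'| - A.sup' hA (fun k => |b k - q' k|) := by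
  have key : ∀ x y z : ℝ, |x - y| ≤ |x - z| + |y - z| := fun x y z => by
    simpa [abs_sub_comm z y] using abs_sub_le x z y
  have h1 := key a p p'
  have h2 : A.sup' hA (fun k => |b k - q' k|) ≤ A.sup' hA (fun k => |b k - q k|) + ε := by
    refine Finset.sup'_le _ _ fun k hk => ?_
    have h3 := Finset.le_sup' (fun k => |b k - q k|) hk
    have h4 := key (b k) (q' k) (q k)
    have h5 := hq k
    rw [abs_sub_comm] at h5
    linarith
  linarith

/-- The score of `H_i` w.r.t. a public list `K` of `t` hypotheses:
the `⌈(η/2)·t⌉`-th largest lift value `ŵ_i(H_{j_l})(D) - W̃(H_{j_l})(D)`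
has sensitivity `2/s` with respect to the dataset `D`. Here, for each entry
`l` of `K`, `ŵ_i(H_{j_l})(D) = |a l - P̂_D(T l)|` (with `T l` the Scheffé set
`S_{i, j_l}` and `a l = H_{j_l}(S_{i, j_l})`) and
`W̃(H_{j_l})(D) = max_{k ∈ A} |b l k - P̂_D(U l k)|` (with `U l k` the Scheffé
set `S_{k, j_l}` and `b l k = H_{j_l}(S_{k, j_l})`). -/
theorem score_sensitivity {X ι : Type*} [MeasurableSpace X]
    (s t : ℕ) (hs : 0 < s) (ht : 0 < t)
    (η : ℝ) (hη : η ∈ Set.Ioc (0 : ℝ) 1)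
    (T : Fin t → Set X) (hT : ∀ l, MeasurableSet (T l))
    (a : Fin t → ℝ) (ha : ∀ l, a l ∈ Set.Icc (0 : ℝ) 1)
    (A : Finset ι) (hA : A.Nonempty)
    (U : Fin t → ι → Set X) (hU : ∀ l k, MeasurableSet (U l k))
    (b : Fin t → ι → ℝ) (hb : ∀ l k, b l k ∈ Set.Icc (0 : ℝ) 1)
    (score : (Fin s → X) → ℝ)
    (hscore : ∀ D, score D =
      kthLargest
        (List.ofFn fun l : Fin t =>
          |a l - empMass D (T l)| -
            A.sup' hA (fun k => |b l k - empMass D (U l k)|))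
        ⌈(η / 2) * (t : ℝ)⌉₊)
    (D D' : Fin s → X)
    (hdiff : ∃ k : Fin s, D k ≠ D' k ∧ ∀ l : Fin s, l ≠ k → D l = D' l) :
    |score D - score D'| ≤ 2 / (s : ℝ) := by
  obtain ⟨k, -, hk⟩ := hdiff
  have hpos : (0 : ℝ) ≤ 2 / (s : ℝ) := by positivity
  have hε : 2 * (1 / (s : ℝ)) = 2 / (s : ℝ) := by ring
  -- The one-sided bound is stated for arbitrary neighbours, since it is used in both directions.
  have main : ∀ E E' : Fin s → X, (∀ l : Fin s, l ≠ k → E l = E' l) →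
      score E - 2 / (s : ℝ) ≤ score E' := by
    intro E E' hE
    rw [hscore E, hscore E']
    refine kthLargest_sub_le _ _ _ hpos (fun l => ?_) _
    rw [← hε]
    exact lift_sub_le A hA _ _ _ _ _ _ _ (abs_empMass_sub_le E E' k hE _)
      (fun j => abs_empMass_sub_le E E' k hE _)
  have h1 := main D D' hk
  have h2 := main D' D (fun l hl => (hk l hl).symm)
  rw [abs_le]
  constructor <;> linarith
end

section
/- Let n >= 1, c > 0, sigma' > 0 and eta' in (0,1] with exp(-c·sigma') < 1/2. Let W_1, ..., W_n and W'_1, ..., W'_n be real numbers with W'_j >= W_j for all j, set D_j := W'_j - W_j, Z := sum over j of exp(-c·W_j), and let Q be the probability distribution on [n] with Q(j) = exp(-c·W_j)/Z. If the Q-probability of the set {j : D_j >= sigma'} is at least eta', then sum over j of exp(-c·W'_j) <= (1 - eta'/2)·Z. -/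
/-!
The weight of an index whose lift is at least the threshold is multiplied by at most
`exp (-c * σ') < 1 / 2`, and no weight increases. Summing, the normalization constant `Z` loses
at least half of the total weight of the lifted indices, which is at least `η' * Z`.
-/

open Finset

/-- Normalization-decrease lemma for the exponential mechanism (finite-sum
form): if the updated proxy distances `W'` dominate `W`, the exponential
mechanism distribution `Q(j) ∝ exp(-c·W j)` assigns mass at least `η'` to the
indices whose lift `W' j - W j` is at least `σ'`, and `exp(-c·σ') < 1/2`, then
the new normalization constant drops by a factor `1 - η'/2`. -/
theorem normalization_decrease (n : ℕ) (hn : 1 ≤ n)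
    (c σ' η' : ℝ) (hc : 0 < c) (hσ : 0 < σ') (hη : η' ∈ Set.Ioc (0 : ℝ) 1)
    (hexp : Real.exp (-c * σ') < 1 / 2)
    (W W' : Fin n → ℝ) (hWW' : ∀ j, W j ≤ W' j)
    (hprompt : η' ≤
      (∑ j ∈ Finset.univ.filter (fun j : Fin n => σ' ≤ W' j - W j),
          Real.exp (-c * W j)) /
        (∑ j : Fin n, Real.exp (-c * W j))) :
    (∑ j : Fin n, Real.exp (-c * W' j)) ≤
      (1 - η' / 2) * ∑ j : Fin n, Real.exp (-c * W j) := by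
  have hZ : 0 < ∑ j : Fin n, Real.exp (-c * W j) :=
    Finset.sum_pos (fun j _ => Real.exp_pos _) ⟨⟨0, hn⟩, Finset.mem_univ _⟩
  rw [le_div_iff₀ hZ] at hprompt
  -- Each term with lift at least `σ'` loses at least half of its weight; the others do not grow.
  have key : ∀ j : Fin n, Real.exp (-c * W' j) ≤ Real.exp (-c * W j) -
      (if σ' ≤ W' j - W j then Real.exp (-c * W j) else 0) / 2 := by
    intro j
    split_ifs with h
    · have h1 : Real.exp (-c * W' j) ≤ Real.exp (-c * σ') * Real.exp (-c * W j) := by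
        rw [← Real.exp_add]
        apply Real.exp_le_exp.mpr
        nlinarith
      nlinarith [Real.exp_pos (-c * W j)]
    · have h1 : Real.exp (-c * W' j) ≤ Real.exp (-c * W j) := by
        apply Real.exp_le_exp.mpr
        nlinarith [hWW' j]
      linarith
  have hsum := Finset.sum_le_sum (fun j (_ : j ∈ Finset.univ) => key j)
  rw [Finset.sum_sub_distrib, ← Finset.sum_div, ← Finset.sum_filter] at hsum
  linarith
end

section
/- Let n >= 1, c > 0, eta' in (0,1], and OPT in [0,1]. For each round l = 0, 1, ..., t let W^{(l)}_1, ..., W^{(l)}_n be nonnegative reals with W^{(0)}_j = 0 for all j, define Z^{(l)} := sum over j of exp(-c·W^{(l)}_j), and suppose Z^{(l)} <= (1 - eta'/2)·Z^{(l-1)} for every l in {1, ..., t}. Suppose moreover there exists an index j* with W^{(t)}_{j*} <= OPT. Then t <= (log n + c·OPT) / log(1 + eta'/2). -/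
/-!
Since `(1 + x) (1 - x) ≤ 1`, the geometric decrease of `Z^(l) = ∑ j, exp (-c * W l j)` gives
`(1 + η'/2)^t * Z^(t) ≤ Z^(0) = n`. The single term at `jstar` gives `Z^(t) ≥ exp (-c * OPT)`.
Combining the two and taking logarithms bounds `t`.
-/

/-- Bound on the number of rounds: if the proxy distances `W l j` start at 0,
the normalization constants `Z^(l) = ∑_j exp(-c·W l j)` decrease geometrically
by a factor `1 - η'/2` at each round, and some index `j*` (the optimal
hypothesis) keeps `W t j* ≤ OPT`, then
`t ≤ (log n + c·OPT) / log(1 + η'/2)`. -/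
theorem round_bound (n : ℕ) (hn : 1 ≤ n)
    (c : ℝ) (hc : 0 < c) (η' : ℝ) (hη : η' ∈ Set.Ioc (0 : ℝ) 1)
    (OPT : ℝ) (hOPT : OPT ∈ Set.Icc (0 : ℝ) 1)
    (t : ℕ) (W : ℕ → Fin n → ℝ)
    (hWnn : ∀ l j, 0 ≤ W l j)
    (hW0 : ∀ j, W 0 j = 0)
    (hZ : ∀ l, 1 ≤ l → l ≤ t →
      (∑ j : Fin n, Real.exp (-c * W l j)) ≤
        (1 - η' / 2) * ∑ j : Fin n, Real.exp (-c * W (l - 1) j))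
    (jstar : Fin n) (hjstar : W t jstar ≤ OPT) :
    (t : ℝ) ≤ (Real.log n + c * OPT) / Real.log (1 + η' / 2) := by
  obtain ⟨hη0, hη1⟩ := hη
  -- `(1 + η'/2) (1 - η'/2) ≤ 1`, so the potential `(1 + η'/2)^l * Z^(l)` never exceeds `Z^(0) = n`.
  have key : ∀ l, l ≤ t →
      (1 + η' / 2) ^ l * ∑ j : Fin n, Real.exp (-c * W l j) ≤ n := by
    intro l
    induction l with
    | zero => intro _; simp [hW0]
    | succ l ih =>
      intro hl
      have h1 := hZ (l + 1) (by omega) hl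
      rw [Nat.add_sub_cancel] at h1
      have hnn : 0 ≤ (1 + η' / 2) ^ l * ∑ j : Fin n, Real.exp (-c * W l j) := by positivity
      calc (1 + η' / 2) ^ (l + 1) * ∑ j : Fin n, Real.exp (-c * W (l + 1) j)
          ≤ (1 + η' / 2) ^ (l + 1) *
              ((1 - η' / 2) * ∑ j : Fin n, Real.exp (-c * W l j)) := by gcongr
        _ = (1 - (η' / 2) ^ 2) *
              ((1 + η' / 2) ^ l * ∑ j : Fin n, Real.exp (-c * W l j)) := by ring
        _ ≤ 1 * ((1 + η' / 2) ^ l * ∑ j : Fin n, Real.exp (-c * W l j)) := by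
            gcongr
            linarith [sq_nonneg (η' / 2)]
        _ ≤ n := by rw [one_mul]; exact ih (by omega)
  have hlow : Real.exp (-(c * OPT)) ≤ ∑ j : Fin n, Real.exp (-c * W t j) :=
    calc Real.exp (-(c * OPT)) ≤ Real.exp (-c * W t jstar) := by
          apply Real.exp_le_exp.mpr
          nlinarith
      _ ≤ _ := Finset.single_le_sum (f := fun j => Real.exp (-c * W t j))
          (fun j _ => (Real.exp_pos _).le) (Finset.mem_univ jstar)
  have hmain : (1 + η' / 2) ^ t * Real.exp (-(c * OPT)) ≤ n :=
    (mul_le_mul_of_nonneg_left hlow (by positivity)).trans (key t le_rfl)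
  have hlog := Real.log_le_log (by positivity) hmain
  rw [Real.log_mul (by positivity) (Real.exp_pos _).ne', Real.log_pow, Real.log_exp] at hlog
  rw [le_div_iff₀ (Real.log_pos (by linarith))]
  linarith
end
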